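/- Let ξ, η, ξ₀, V be real numbers, set ω = ξ² + η² + V, and let ψ(x,y,t) = exp(i(ξx + ηy − ωt)). Then at every point (x,y,t) ∈ ℝ³, i∂ₓ∂ᵧᵧψ − ∂ₓ∂ₜψ + i(3ξ₀² − V)∂ₓψ − (ξ₀³ − 3ξ₀V)ψ − 3ξ₀∂ᵧᵧψ − 3iξ₀∂ₜψ = −(ξ + ξ₀)³·ψ(x,y,t). In particular, the west absorbing boundary condition annihilates exactly those plane waves with x-wave number ξ = −ξ₀, for every transverse wave number η. -/

import Mathlib

/-- The 2D plane wave `ψ(x,y,t) = exp(i(ξx + ηy − ωt))`. -/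
noncomputable def planeWave2D (ξ η ω : ℝ) (x y t : ℝ) : ℂ :=
  Complex.exp (Complex.I * ((ξ * x + η * y - ω * t : ℝ) : ℂ))

/-!
The boundary operator multiplies a plane wave by its symbol, which depends on `ω`, `η` and `V` only
through `s = ω - η² - V`. This symbol, `-(ξ (s + 3 ξ₀²) + ξ₀ (3 s + ξ₀²))`, comes from clearing the
denominator in the `(1,1)`-Padé approximation `ξ = -ξ₀ (3 s + ξ₀²) / (s + 3 ξ₀²)` of `ξ = -√s` at
`s = ξ₀²`. When `s = ξ²`, its two summands are, up to sign, the parts of `(ξ + ξ₀)³` that are odd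
and even in `ξ`.
-/

/-- The differential operator of the west absorbing boundary condition ABC(1,1) with reference wave
number `ξ₀` and potential `V`; the boundary condition for `ψ` reads `westABC ξ₀ V ψ x y t = 0`. -/
noncomputable def westABC (ξ₀ V : ℝ) (ψ : ℝ → ℝ → ℝ → ℂ) (x y t : ℝ) : ℂ :=
  Complex.I *
      deriv (fun x' : ℝ => deriv (fun y' : ℝ => deriv (fun y'' : ℝ => ψ x' y'' t) y') y) x
    - deriv (fun x' : ℝ => deriv (fun t' : ℝ => ψ x' y t') t) x
    + Complex.I * ((3 * ξ₀ ^ 2 - V : ℝ) : ℂ) * deriv (fun x' : ℝ => ψ x' y t) x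
    - ((ξ₀ ^ 3 - 3 * ξ₀ * V : ℝ) : ℂ) * ψ x y t
    - 3 * (ξ₀ : ℂ) * deriv (fun y' : ℝ => deriv (fun y'' : ℝ => ψ x y'' t) y') y
    - 3 * Complex.I * (ξ₀ : ℂ) * deriv (fun t' : ℝ => ψ x y t') t

/-- The symbol of `westABC`, the factor by which the operator multiplies a plane wave, written in
terms of the `x`-wave number `ξ` and of `s = ω - η² - V`. -/
def westABCSymbol {R : Type*} [CommRing R] (ξ₀ ξ s : R) : R :=
  -(ξ * (s + 3 * ξ₀ ^ 2) + ξ₀ * (3 * s + ξ₀ ^ 2))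

theorem westABCSymbol_sq {R : Type*} [CommRing R] (ξ₀ ξ : R) :
    westABCSymbol ξ₀ ξ (ξ ^ 2) = -(ξ + ξ₀) ^ 3 := by
  unfold westABCSymbol
  ring

theorem hasDerivAt_cexp_I_mul_ofReal {φ : ℝ → ℝ} {φ' s : ℝ} (hφ : HasDerivAt φ φ' s) :
    HasDerivAt (fun r : ℝ => Complex.exp (Complex.I * (φ r : ℂ)))
      (Complex.I * φ' * Complex.exp (Complex.I * (φ s : ℂ))) s :=
  (hφ.ofReal_comp.const_mul Complex.I).cexp.congr_deriv (mul_comm _ _)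

section PlaneWave

variable (ξ η ω x y t : ℝ)

theorem planeWave2D_ne_zero : planeWave2D ξ η ω x y t ≠ 0 :=
  Complex.exp_ne_zero _

theorem hasDerivAt_planeWave2D_x :
    HasDerivAt (fun x' : ℝ => planeWave2D ξ η ω x' y t)
      (Complex.I * ξ * planeWave2D ξ η ω x y t) x :=
  hasDerivAt_cexp_I_mul_ofReal
    (((hasDerivAt_const_mul ξ).add_const (η * y)).sub_const (ω * t))

theorem hasDerivAt_planeWave2D_y :
    HasDerivAt (fun y' : ℝ => planeWave2D ξ η ω x y' t)
      (Complex.I * η * planeWave2D ξ η ω x y t) y :=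
  hasDerivAt_cexp_I_mul_ofReal
    (((hasDerivAt_const_mul η).const_add (ξ * x)).sub_const (ω * t))

theorem hasDerivAt_planeWave2D_t :
    HasDerivAt (fun t' : ℝ => planeWave2D ξ η ω x y t')
      (Complex.I * (-ω : ℝ) * planeWave2D ξ η ω x y t) t :=
  hasDerivAt_cexp_I_mul_ofReal ((hasDerivAt_const_mul ω).const_sub (ξ * x + η * y))

theorem deriv_deriv_planeWave2D_y :
    deriv (fun y' : ℝ => deriv (fun y'' : ℝ => planeWave2D ξ η ω x y'' t) y') y =
      -(η : ℂ) ^ 2 * planeWave2D ξ η ω x y t := by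
  simp only [(hasDerivAt_planeWave2D_y ξ η ω x _ t).deriv, deriv_const_mul_field]
  linear_combination (η : ℂ) ^ 2 * planeWave2D ξ η ω x y t * Complex.I_sq

theorem westABC_planeWave2D (ξ₀ V : ℝ) :
    westABC ξ₀ V (planeWave2D ξ η ω) x y t =
      ((westABCSymbol ξ₀ ξ (ω - η ^ 2 - V) : ℝ) : ℂ) * planeWave2D ξ η ω x y t := by
  simp only [westABC, westABCSymbol, deriv_deriv_planeWave2D_y, deriv_const_mul_field,
    (hasDerivAt_planeWave2D_t ξ η ω _ y t).deriv, (hasDerivAt_planeWave2D_x ξ η ω x y t).deriv]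
  push_cast
  linear_combination (-ξ * η ^ 2 + ξ * ω + (3 * ξ₀ ^ 2 - V) * ξ + 3 * ξ₀ * ω) *
    planeWave2D ξ η ω x y t * Complex.I_sq

theorem westABC_planeWave2D_eq_zero_iff (ξ₀ V : ℝ) :
    westABC ξ₀ V (planeWave2D ξ η ω) x y t = 0 ↔ westABCSymbol ξ₀ ξ (ω - η ^ 2 - V) = 0 := by
  rw [westABC_planeWave2D, mul_eq_zero_iff_right (planeWave2D_ne_zero ξ η ω x y t),
    Complex.ofReal_eq_zero]

end PlaneWave

/-- for the 2D plane wave with `ω = ξ² + η² + V`, the left-hand side of the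
west absorbing boundary condition ABC(1,1) equals `−(ξ + ξ₀)³·ψ`; in particular it
annihilates exactly the plane waves with `ξ = −ξ₀`, for every transverse wave number `η`. -/
theorem west_abc_plane_wave (ξ η ξ₀ V : ℝ) (ω : ℝ) (hω : ω = ξ ^ 2 + η ^ 2 + V) :
    (∀ x y t : ℝ,
      Complex.I *
          deriv (fun x' : ℝ =>
            deriv (fun y' : ℝ => deriv (fun y'' : ℝ => planeWave2D ξ η ω x' y'' t) y') y) x
        - deriv (fun x' : ℝ => deriv (fun t' : ℝ => planeWave2D ξ η ω x' y t') t) x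
        + Complex.I * ((3 * ξ₀ ^ 2 - V : ℝ) : ℂ) *
            deriv (fun x' : ℝ => planeWave2D ξ η ω x' y t) x
        - ((ξ₀ ^ 3 - 3 * ξ₀ * V : ℝ) : ℂ) * planeWave2D ξ η ω x y t
        - 3 * (ξ₀ : ℂ) *
            deriv (fun y' : ℝ => deriv (fun y'' : ℝ => planeWave2D ξ η ω x y'' t) y') y
        - 3 * Complex.I * (ξ₀ : ℂ) * deriv (fun t' : ℝ => planeWave2D ξ η ω x y t') t
      = -(((ξ + ξ₀ : ℝ) : ℂ)) ^ 3 * planeWave2D ξ η ω x y t) ∧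
    ((∀ x y t : ℝ,
      Complex.I *
          deriv (fun x' : ℝ =>
            deriv (fun y' : ℝ => deriv (fun y'' : ℝ => planeWave2D ξ η ω x' y'' t) y') y) x
        - deriv (fun x' : ℝ => deriv (fun t' : ℝ => planeWave2D ξ η ω x' y t') t) x
        + Complex.I * ((3 * ξ₀ ^ 2 - V : ℝ) : ℂ) *
            deriv (fun x' : ℝ => planeWave2D ξ η ω x' y t) x
        - ((ξ₀ ^ 3 - 3 * ξ₀ * V : ℝ) : ℂ) * planeWave2D ξ η ω x y t
        - 3 * (ξ₀ : ℂ) *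
            deriv (fun y' : ℝ => deriv (fun y'' : ℝ => planeWave2D ξ η ω x y'' t) y') y
        - 3 * Complex.I * (ξ₀ : ℂ) * deriv (fun t' : ℝ => planeWave2D ξ η ω x y t') t
      = 0) ↔ ξ = -ξ₀) := by
  change (∀ x y t, westABC ξ₀ V (planeWave2D ξ η ω) x y t =
      -((ξ + ξ₀ : ℝ) : ℂ) ^ 3 * planeWave2D ξ η ω x y t) ∧
    ((∀ x y t, westABC ξ₀ V (planeWave2D ξ η ω) x y t = 0) ↔ ξ = -ξ₀)
  have symbol_eq : westABCSymbol ξ₀ ξ (ω - η ^ 2 - V) = -(ξ + ξ₀) ^ 3 := by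
    have dispersion : ω - η ^ 2 - V = ξ ^ 2 := by linear_combination hω
    rw [dispersion, westABCSymbol_sq]
  constructor
  · intro x y t
    rw [westABC_planeWave2D, symbol_eq, Complex.ofReal_neg, Complex.ofReal_pow]
  · simp only [westABC_planeWave2D_eq_zero_iff, symbol_eq, forall_const, neg_eq_zero,
      pow_eq_zero_iff three_ne_zero, add_eq_zero_iff_eq_neg]
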